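/- (Theorem 2) Define, for ρ > 0, I_XY(ρ) = log( ρ · √(1 + ρ⁻¹) ) + ρ⁻¹ · log √(1 + ρ) − ρ + ρ⁻¹ · √(1 + ρ⁻¹) · F(ρ) + ψ(ρ⁻¹) − ψ(1) − 1, where F(ρ) = ∫₀^∞ ξ · K₁(√(1 + ρ⁻¹) · ξ) · I₁(ξ) · log I₁(ξ) dξ. Then lim_{ρ → ∞} ( (1/2) · log ρ ) / I_XY(ρ) = 1; that is, the mutual information is asymptotically equivalent to (1/2) log ρ as ρ → ∞. -/

import Mathlib

open Real MeasureTheory Set Filter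

/-- Modified Bessel function of the first kind of order one,
`I₁(z) = ∑_{k=0}^∞ (z/2)^(2k+1) / (k! (k+1)!)`. -/
noncomputable def besselI1 (z : ℝ) : ℝ :=
  ∑' k : ℕ, (z / 2) ^ (2 * k + 1) / ((Nat.factorial k : ℝ) * (Nat.factorial (k + 1) : ℝ))

/-- Modified Bessel function of the second kind of order one,
`K₁(z) = ∫₀^∞ exp (−z cosh t) cosh t dt`. -/
noncomputable def besselK1 (z : ℝ) : ℝ :=
  ∫ t in Ioi (0 : ℝ), Real.exp (-z * Real.cosh t) * Real.cosh t

/-- Digamma function `ψ(x) = d/dx log Γ(x)`. -/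
noncomputable def digamma (x : ℝ) : ℝ :=
  deriv (fun y : ℝ => Real.log (Real.Gamma y)) x

/-- Conditional output density of the noncentral chi channel with four degrees of freedom. -/
noncomputable def condDensity (σN x y : ℝ) : ℝ :=
  (2 / σN ^ 2) * (y ^ 2 / x) * Real.exp (-(x ^ 2 + y ^ 2) / σN ^ 2) *
    besselI1 (2 * x * y / σN ^ 2)

/-- Rayleigh input density with mean-square `σS²`. -/
noncomputable def rayleighDensity (σS x : ℝ) : ℝ :=
  (2 * x / σS ^ 2) * Real.exp (-x ^ 2 / σS ^ 2)

/-- `F(ρ) = ∫₀^∞ ξ K₁(√(1+ρ⁻¹) ξ) I₁(ξ) log I₁(ξ) dξ`. -/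
noncomputable def Fint (ρ : ℝ) : ℝ :=
  ∫ ξ in Ioi (0 : ℝ),
    ξ * besselK1 (Real.sqrt (1 + ρ⁻¹) * ξ) * besselI1 ξ * Real.log (besselI1 ξ)

/-- Closed-form mutual information of Theorem 1. -/
noncomputable def Ixy (ρ : ℝ) : ℝ :=
  Real.log (ρ * Real.sqrt (1 + ρ⁻¹)) + ρ⁻¹ * Real.log (Real.sqrt (1 + ρ)) - ρ +
    ρ⁻¹ * Real.sqrt (1 + ρ⁻¹) * Fint ρ + digamma ρ⁻¹ - digamma 1 - 1

/-- The even moments of the cosine over a half period. -/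
lemma integral_cos_pow_two_mul_add_two (k : ℕ) :
    ∫ θ in (0 : ℝ)..π, cos θ ^ (2 * k + 2) =
      π * (2 * k + 1).factorial / (2 ^ (2 * k + 1) * (k.factorial * (k + 1).factorial)) := by
  induction k with
  | zero =>
    simp [integral_cos_sq]
  | succ k ih =>
    rw [show 2 * (k + 1) + 2 = (2 * k + 2) + 2 by ring, integral_cos_pow, ih]
    simp only [sin_pi, sin_zero, mul_zero, sub_zero, zero_div, zero_add]
    rw [show 2 * (k + 1) + 1 = (2 * k + 1) + 1 + 1 by ring, Nat.factorial_succ (2 * k + 1 + 1),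
      Nat.factorial_succ (2 * k + 1), Nat.factorial_succ (k + 1), Nat.factorial_succ k]
    push_cast
    have h1 : (k.factorial : ℝ) ≠ 0 := by positivity
    have h2 : (k : ℝ) + 1 ≠ 0 := by positivity
    have h3 : (k : ℝ) + 1 + 1 ≠ 0 := by positivity
    field_simp
    ring

/-- The odd moments of the cosine over a half period vanish. -/
lemma integral_cos_pow_two_mul_add_one (k : ℕ) :
    ∫ θ in (0 : ℝ)..π, cos θ ^ (2 * k + 1) = 0 := by
  induction k with
  | zero => simp
  | succ k ih =>
    rw [show 2 * (k + 1) + 1 = (2 * k + 1) + 2 by ring, integral_cos_pow, ih]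
    simp

/-- Integral representation of `I₁`. -/
lemma besselI1_eq_integral (z : ℝ) :
    besselI1 z = π⁻¹ * ∫ θ in (0 : ℝ)..π, exp (z * cos θ) * cos θ := by
  have key : HasSum (fun n : ℕ => ∫ θ in (0 : ℝ)..π, (z * cos θ) ^ n / n.factorial * cos θ)
      (∫ θ in (0 : ℝ)..π, exp (z * cos θ) * cos θ) := by
    refine intervalIntegral.hasSum_integral_of_dominated_convergence
      (fun n _ => |z| ^ n / n.factorial) (fun n => ?_) (fun n => ?_) ?_ ?_ ?_
    · exact (by fun_prop : Continuous _).aestronglyMeasurable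
    · refine Eventually.of_forall fun θ _ => ?_
      rw [norm_mul, norm_div, norm_pow, norm_mul, Real.norm_eq_abs, Real.norm_eq_abs,
        RCLike.norm_natCast]
      have h1 := abs_cos_le_one θ
      have h2 : (|z| * |cos θ|) ^ n ≤ |z| ^ n := by
        gcongr
        exact mul_le_of_le_one_right (abs_nonneg _) h1
      calc (|z| * |cos θ|) ^ n / n.factorial * |cos θ|
          ≤ (|z| * |cos θ|) ^ n / n.factorial := mul_le_of_le_one_right (by positivity) h1
        _ ≤ _ := by gcongr
    · exact Eventually.of_forall fun θ _ => Real.summable_pow_div_factorial _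
    · exact intervalIntegrable_const
    · refine Eventually.of_forall fun θ _ => ?_
      rw [Real.exp_eq_exp_ℝ]
      exact (NormedSpace.expSeries_div_hasSum_exp (z * cos θ)).mul_right _
  have hterm : ∀ n : ℕ, ∫ θ in (0 : ℝ)..π, (z * cos θ) ^ n / n.factorial * cos θ =
      z ^ n / n.factorial * ∫ θ in (0 : ℝ)..π, cos θ ^ (n + 1) := by
    intro n
    rw [← intervalIntegral.integral_const_mul]
    congr 1
    ext θ
    ring
  have hinj : Function.Injective fun k : ℕ => 2 * k + 1 := fun a b h => by simpa using h
  have hodd : HasSum (fun k : ℕ => z ^ (2 * k + 1) / (2 * k + 1).factorial *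
      ∫ θ in (0 : ℝ)..π, cos θ ^ (2 * k + 1 + 1))
      (∫ θ in (0 : ℝ)..π, exp (z * cos θ) * cos θ) := by
    simp_rw [hterm] at key
    refine (hinj.hasSum_iff ?_).2 key
    intro n hn
    rcases Nat.even_or_odd' n with ⟨m, rfl | rfl⟩
    · rw [integral_cos_pow_two_mul_add_one, mul_zero]
    · exact absurd ⟨m, rfl⟩ hn
  rw [besselI1, ← (hodd.mul_left π⁻¹).tsum_eq]
  congr 1
  ext k
  rw [integral_cos_pow_two_mul_add_two]
  have h0 : ((2 * k + 1).factorial : ℝ) ≠ 0 := by positivity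
  rw [div_pow]
  field_simp

lemma measurable_besselI1 : Measurable besselI1 := by
  have h : besselI1 = fun z => π⁻¹ * ∫ θ in Ioc (0 : ℝ) π, exp (z * cos θ) * cos θ := by
    ext z
    rw [besselI1_eq_integral, intervalIntegral.integral_of_le pi_pos.le]
  rw [h]
  refine Measurable.const_mul (StronglyMeasurable.measurable ?_) _
  exact StronglyMeasurable.integral_prod_right
    (f := fun z θ => exp (z * cos θ) * cos θ) (by fun_prop : Continuous _).stronglyMeasurable

lemma measurable_besselK1 : Measurable besselK1 := by
  refine StronglyMeasurable.measurable ?_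
  exact StronglyMeasurable.integral_prod_right
    (f := fun z t => exp (-z * cosh t) * cosh t) (by fun_prop : Continuous _).stronglyMeasurable

lemma besselI1_term_le {z : ℝ} (hz : 0 ≤ z) (k : ℕ) :
    (z / 2) ^ (2 * k + 1) / ((k.factorial : ℝ) * ((k + 1).factorial : ℝ)) ≤
      z / 2 * (((z / 2) ^ 2) ^ k / k.factorial) := by
  have h1 : (1 : ℝ) ≤ (k + 1).factorial := by exact_mod_cast Nat.factorial_pos _
  have h2 : (0 : ℝ) < k.factorial := by positivity
  calc (z / 2) ^ (2 * k + 1) / ((k.factorial : ℝ) * ((k + 1).factorial : ℝ))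
      ≤ (z / 2) ^ (2 * k + 1) / (k.factorial : ℝ) := by
        gcongr
        exact le_mul_of_one_le_right h2.le h1
    _ = _ := by rw [pow_succ, pow_mul]; ring

lemma summable_besselI1_term {z : ℝ} (hz : 0 ≤ z) :
    Summable fun k : ℕ =>
      (z / 2) ^ (2 * k + 1) / ((k.factorial : ℝ) * ((k + 1).factorial : ℝ)) :=
  Summable.of_nonneg_of_le (fun k => by positivity) (besselI1_term_le hz)
    ((Real.summable_pow_div_factorial ((z / 2) ^ 2)).mul_left (z / 2))

lemma half_le_besselI1 {z : ℝ} (hz : 0 ≤ z) : z / 2 ≤ besselI1 z := by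
  have := (summable_besselI1_term hz).le_tsum 0 (fun k _ => by positivity)
  simpa [besselI1] using this

lemma besselI1_le_mul_exp {z : ℝ} (hz : 0 ≤ z) : besselI1 z ≤ z / 2 * exp ((z / 2) ^ 2) := by
  have hs := (Real.summable_pow_div_factorial ((z / 2) ^ 2)).mul_left (z / 2)
  have he : ∑' k : ℕ, ((z / 2) ^ 2) ^ k / (k.factorial : ℝ) = exp ((z / 2) ^ 2) := by
    rw [Real.exp_eq_exp_ℝ, NormedSpace.exp_eq_tsum_div]
  rw [← he, ← tsum_mul_left]
  exact (summable_besselI1_term hz).tsum_le_tsum (besselI1_term_le hz) hs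

/-- The second moment of a Gaussian over the half-line. -/
lemma integral_sq_mul_exp_neg_mul_sq_Ioi {b : ℝ} (hb : 0 < b) :
    ∫ s in Ioi (0 : ℝ), s ^ 2 * exp (-b * s ^ 2) = √(π / b) / 2 / (2 * b) := by
  have h := integral_rpow_mul_exp_neg_mul_rpow (p := 2) (q := 2) (b := b)
    (by norm_num) (by norm_num) hb
  simp only [rpow_two] at h
  rw [h, show -((2 : ℝ) + 1) / 2 = -(1 / 2) + -1 by norm_num,
    show ((2 : ℝ) + 1) / 2 = 1 / 2 + 1 by norm_num, Gamma_add_one (by norm_num),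
    Gamma_one_half_eq, rpow_add hb, rpow_neg hb.le, ← sqrt_eq_rpow, sqrt_div pi_pos.le,
    rpow_neg_one]
  have : √b ≠ 0 := by positivity
  field_simp

lemma integrableOn_sq_mul_exp_neg_mul_sq {b : ℝ} (hb : 0 < b) :
    IntegrableOn (fun s : ℝ => s ^ 2 * exp (-b * s ^ 2)) (Ioi 0) := by
  simpa using integrableOn_rpow_mul_exp_neg_mul_sq hb (s := 2) (by norm_num)

lemma integrableOn_exp_neg_mul_sq {b : ℝ} (hb : 0 < b) :
    IntegrableOn (fun s : ℝ => exp (-b * s ^ 2)) (Ioi 0) :=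
  (integrable_exp_neg_mul_sq hb).integrableOn

lemma digamma_add_one {x : ℝ} (hx : 0 < x) : digamma (x + 1) = digamma x + x⁻¹ := by
  have hd : ∀ y : ℝ, 0 < y → DifferentiableAt ℝ (fun y => log (Gamma y)) y := fun y hy =>
    (differentiableAt_Gamma fun m => by
      have : (0 : ℝ) ≤ m := m.cast_nonneg
      linarith).log (Gamma_pos_of_pos hy).ne'
  have h1 : deriv (fun y => log (Gamma (y + 1))) x = digamma (x + 1) :=
    deriv_comp_add_const (fun y => log (Gamma y)) 1 x
  rw [← h1]
  have h2 : (fun y => log (Gamma (y + 1))) =ᶠ[nhds x] fun y => log (Gamma y) + log y := by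
    filter_upwards [lt_mem_nhds hx] with y hy
    rw [Gamma_add_one hy.ne', log_mul hy.ne' (Gamma_pos_of_pos hy).ne', add_comm]
  rw [h2.deriv_eq, deriv_fun_add (hd x hx) (differentiableAt_log hx.ne'), Real.deriv_log]
  rfl

lemma monotoneOn_digamma : MonotoneOn digamma (Ioi 0) := by
  refine convexOn_log_Gamma.monotoneOn_deriv fun y hy => ?_
  exact (differentiableAt_Gamma fun m => by
      have : (0 : ℝ) ≤ m := m.cast_nonneg
      have : 0 < y := hy
      linarith).log (Gamma_pos_of_pos hy).ne'

lemma image_sqrt_two_mul_sinh_Ioi :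
    (fun t : ℝ => √2 * sinh (t / 2)) '' Ioi 0 = Ioi 0 := by
  ext y
  simp only [mem_image, mem_Ioi]
  constructor
  · rintro ⟨t, ht, rfl⟩
    have := sinh_pos_iff.2 (half_pos ht)
    positivity
  · intro hy
    refine ⟨2 * arsinh (y / √2), ?_, ?_⟩
    · have : 0 < arsinh (y / √2) := arsinh_pos_iff.2 (by positivity)
      positivity
    · rw [mul_div_cancel_left₀ _ (two_ne_zero), sinh_arsinh]
      field_simp

lemma hasDerivAt_sqrt_two_mul_sinh (t : ℝ) :
    HasDerivAt (fun t : ℝ => √2 * sinh (t / 2)) (√2 / 2 * cosh (t / 2)) t := by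
  have := (((hasDerivAt_id t).div_const 2).sinh).const_mul √2
  refine this.congr_deriv ?_
  simp only [id]
  ring

lemma injOn_sqrt_two_mul_sinh : InjOn (fun t : ℝ => √2 * sinh (t / 2)) (Ioi 0) := by
  intro x _ y _ h
  have h2 : √2 ≠ 0 := by positivity
  have := sinh_injective (mul_left_cancel₀ h2 h)
  linarith

lemma integral_comp_sqrt_two_mul_sinh (g : ℝ → ℝ) :
    ∫ t in Ioi (0 : ℝ), g (√2 * sinh (t / 2)) * cosh (t / 2) = √2 * ∫ s in Ioi (0 : ℝ), g s := by
  have h := integral_image_eq_integral_abs_deriv_smul measurableSet_Ioi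
    (fun t _ => (hasDerivAt_sqrt_two_mul_sinh t).hasDerivWithinAt) injOn_sqrt_two_mul_sinh g
  rw [image_sqrt_two_mul_sinh_Ioi] at h
  rw [h, ← integral_const_mul]
  congr 1
  ext t
  have := cosh_pos (t / 2)
  rw [abs_of_nonneg (by positivity), smul_eq_mul]
  have h2 : √2 * √2 = 2 := mul_self_sqrt (by norm_num)
  linear_combination (-(cosh (t / 2) * g (√2 * sinh (t / 2))) / 2) * h2

lemma integrableOn_comp_sqrt_two_mul_sinh {g : ℝ → ℝ} (hg : IntegrableOn g (Ioi 0)) :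
    IntegrableOn (fun t => g (√2 * sinh (t / 2)) * cosh (t / 2)) (Ioi 0) := by
  rw [← image_sqrt_two_mul_sinh_Ioi, integrableOn_image_iff_integrableOn_abs_deriv_smul
    measurableSet_Ioi (fun t _ => (hasDerivAt_sqrt_two_mul_sinh t).hasDerivWithinAt)
    injOn_sqrt_two_mul_sinh] at hg
  refine (hg.const_mul √2).congr (Eventually.of_forall fun t => ?_)
  have := cosh_pos (t / 2)
  simp only
  rw [abs_of_nonneg (by positivity), smul_eq_mul]
  have h2 : √2 * √2 = 2 := mul_self_sqrt (by norm_num)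
  linear_combination ((cosh (t / 2) * g (√2 * sinh (t / 2))) / 2) * h2

lemma cosh_eq_one_add_sq (t : ℝ) : cosh t = 1 + (√2 * sinh (t / 2)) ^ 2 := by
  have h := cosh_two_mul (t / 2)
  rw [mul_div_cancel₀ t two_ne_zero] at h
  rw [h, cosh_sq, mul_pow, sq_sqrt (by norm_num)]
  ring

lemma cosh_half_le_cosh (t : ℝ) : cosh (t / 2) ≤ cosh t := by
  rw [cosh_le_cosh, abs_div]
  have := abs_nonneg t
  norm_num

lemma sqrt_two_mul_sqrt_div {x : ℝ} (hx : 0 < x) : √2 * (√(π / x) / 2) = √(π / (2 * x)) := by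
  have h : π / x = 2 ^ 2 * (π / (2 * x)) / 2 := by field_simp
  rw [h, sqrt_div' _ (by norm_num), sqrt_mul (by norm_num), sqrt_sq (by norm_num)]
  have : √2 ≠ 0 := by positivity
  field_simp

lemma besselK1_bounds {x : ℝ} (hx : 0 < x) :
    √(π / (2 * x)) * exp (-x) ≤ besselK1 x ∧
      besselK1 x ≤ √(π / (2 * x)) * exp (-x) * (1 + 1 / (2 * x)) := by
  have hi0 := integrableOn_exp_neg_mul_sq hx
  have hi2 := integrableOn_sq_mul_exp_neg_mul_sq hx
  have hlow_int := (integrableOn_comp_sqrt_two_mul_sinh hi0).const_mul (exp (-x))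
  have hupp_int := (integrableOn_comp_sqrt_two_mul_sinh (hi0.add hi2)).const_mul (exp (-x))
  have hlow : ∀ t : ℝ, exp (-x) * (exp (-x * (√2 * sinh (t / 2)) ^ 2) * cosh (t / 2)) ≤
      exp (-x * cosh t) * cosh t := by
    intro t
    have h1 : exp (-x) * exp (-x * (√2 * sinh (t / 2)) ^ 2) = exp (-x * cosh t) := by
      rw [← exp_add, cosh_eq_one_add_sq t]; ring_nf
    rw [← mul_assoc, h1]
    gcongr
    exact cosh_half_le_cosh t
  have hupp : ∀ t : ℝ, exp (-x * cosh t) * cosh t ≤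
      exp (-x) * (((fun s => exp (-x * s ^ 2)) + fun s => s ^ 2 * exp (-x * s ^ 2))
        (√2 * sinh (t / 2)) * cosh (t / 2)) := by
    intro t
    simp only [Pi.add_apply]
    have h1 : exp (-x) * exp (-x * (√2 * sinh (t / 2)) ^ 2) = exp (-x * cosh t) := by
      rw [← exp_add, cosh_eq_one_add_sq t]; ring_nf
    have h2 : exp (-x) * ((exp (-x * (√2 * sinh (t / 2)) ^ 2) +
        (√2 * sinh (t / 2)) ^ 2 * exp (-x * (√2 * sinh (t / 2)) ^ 2)) * cosh (t / 2)) =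
        exp (-x * cosh t) * cosh t * cosh (t / 2) := by
      rw [← h1]
      linear_combination (-exp (-x) * exp (-x * (√2 * sinh (t / 2)) ^ 2) * cosh (t / 2)) *
        cosh_eq_one_add_sq t
    rw [h2]
    have := cosh_pos t
    exact le_mul_of_one_le_right (by positivity) (one_le_cosh _)
  have hint : IntegrableOn (fun t => exp (-x * cosh t) * cosh t) (Ioi 0) := by
    refine hupp_int.mono' (by fun_prop : Continuous _).aestronglyMeasurable
      (Eventually.of_forall fun t => ?_)
    have := cosh_pos t
    rw [Real.norm_of_nonneg (by positivity)]
    exact hupp t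
  constructor
  · calc √(π / (2 * x)) * exp (-x)
        = ∫ t in Ioi (0 : ℝ),
            exp (-x) * (exp (-x * (√2 * sinh (t / 2)) ^ 2) * cosh (t / 2)) := by
          rw [integral_const_mul, integral_comp_sqrt_two_mul_sinh (fun s => exp (-x * s ^ 2)),
            integral_gaussian_Ioi, sqrt_two_mul_sqrt_div hx, mul_comm]
      _ ≤ besselK1 x := integral_mono hlow_int hint hlow
  · calc besselK1 x ≤ _ := integral_mono hint hupp_int hupp
      _ = _ := by
          rw [integral_const_mul, integral_comp_sqrt_two_mul_sinh, integral_add' hi0 hi2,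
            integral_gaussian_Ioi, integral_sq_mul_exp_neg_mul_sq_Ioi hx,
            ← sqrt_two_mul_sqrt_div hx]
          ring

lemma integral_comp_sqrt_two_mul_sin {g : ℝ → ℝ} (hg : Continuous g) :
    ∫ θ in (0 : ℝ)..(π / 2), g (√2 * sin (θ / 2)) * cos (θ / 2) =
      √2 * ∫ s in (0 : ℝ)..1, g s := by
  have hd : ∀ θ : ℝ, HasDerivAt (fun θ : ℝ => √2 * sin (θ / 2)) (√2 / 2 * cos (θ / 2)) θ := by
    intro θ
    have := (((hasDerivAt_id θ).div_const 2).sin).const_mul √2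
    refine this.congr_deriv ?_
    simp only [id]
    ring
  have h2 : √2 * √2 = 2 := mul_self_sqrt (by norm_num)
  have h := intervalIntegral.integral_comp_mul_deriv (a := 0) (b := π / 2) (g := g)
    (fun θ _ => hd θ) (by fun_prop) hg
  have he : √2 * sin (π / 2 / 2) = 1 := by
    rw [show π / 2 / 2 = π / 4 by ring, sin_pi_div_four]
    linear_combination h2 / 2
  simp only [he, zero_div, sin_zero, mul_zero] at h
  rw [← h, ← intervalIntegral.integral_const_mul]
  congr 1
  ext θ
  simp only [Function.comp]
  linear_combination (-(cos (θ / 2) * g (√2 * sin (θ / 2))) / 2) * h2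

lemma cos_eq_one_sub_sq (θ : ℝ) : cos θ = 1 - (√2 * sin (θ / 2)) ^ 2 := by
  have h := cos_two_mul (θ / 2)
  rw [mul_div_cancel₀ θ two_ne_zero] at h
  rw [h, cos_sq', mul_pow, sq_sqrt (by norm_num)]
  ring

lemma exp_mul_cos_eq (z θ : ℝ) :
    exp (z * cos θ) = exp z * exp (-z * (√2 * sin (θ / 2)) ^ 2) := by
  rw [← exp_add, cos_eq_one_sub_sq θ]; ring_nf

lemma inv_pi_mul_sqrt_div {z : ℝ} (hz : 0 < z) : π⁻¹ * √(π / (2 * z)) = 1 / √(2 * π * z) := by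
  have hpi := pi_pos
  have h : π / (2 * z) = π ^ 2 / (2 * π * z) := by field_simp
  rw [h, sqrt_div' _ (by positivity), sqrt_sq hpi.le]
  field_simp

lemma besselI1_le {z : ℝ} (hz : 0 < z) : besselI1 z ≤ exp z / √(2 * π * z) := by
  have hpi := pi_pos
  have hc : ∀ a b : ℝ, IntervalIntegrable (fun θ => exp (z * cos θ) * cos θ) volume a b :=
    fun a b => (by fun_prop : Continuous _).intervalIntegrable a b
  have hneg : ∫ θ in (π / 2)..π, exp (z * cos θ) * cos θ ≤ 0 := by
    rw [← neg_nonneg, ← intervalIntegral.integral_neg]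
    refine intervalIntegral.integral_nonneg (by linarith) fun θ hθ => neg_nonneg.2 ?_
    exact mul_nonpos_of_nonneg_of_nonpos (exp_pos _).le
      (cos_nonpos_of_pi_div_two_le_of_le hθ.1 (by linarith [hθ.2]))
  have hpos : ∫ θ in (0 : ℝ)..(π / 2), exp (z * cos θ) * cos θ ≤
      exp z * √(π / (2 * z)) := by
    calc ∫ θ in (0 : ℝ)..(π / 2), exp (z * cos θ) * cos θ
        ≤ ∫ θ in (0 : ℝ)..(π / 2),
            exp z * (exp (-z * (√2 * sin (θ / 2)) ^ 2) * cos (θ / 2)) := by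
          refine intervalIntegral.integral_mono_on (by positivity) (hc _ _)
            ((by fun_prop : Continuous _).intervalIntegrable _ _) fun θ hθ => ?_
          rw [exp_mul_cos_eq, mul_assoc]
          gcongr
          exact cos_le_cos_of_nonneg_of_le_pi (by linarith [hθ.1]) (by linarith [hθ.2])
            (by linarith [hθ.1])
      _ = exp z * (√2 * ∫ s in (0 : ℝ)..1, exp (-z * s ^ 2)) := by
          rw [intervalIntegral.integral_const_mul,
            integral_comp_sqrt_two_mul_sin (g := fun s => exp (-z * s ^ 2)) (by fun_prop)]
      _ ≤ exp z * (√2 * ∫ s in Ioi (0 : ℝ), exp (-z * s ^ 2)) := by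
          rw [intervalIntegral.integral_of_le zero_le_one]
          gcongr ?_ * (?_ * ?_)
          exact setIntegral_mono_set (integrableOn_exp_neg_mul_sq hz)
            (Eventually.of_forall fun s => (exp_pos _).le) Ioc_subset_Ioi_self.eventuallyLE
      _ = _ := by rw [integral_gaussian_Ioi, sqrt_two_mul_sqrt_div hz]
  rw [besselI1_eq_integral, ← intervalIntegral.integral_add_adjacent_intervals (hc 0 (π / 2))
    (hc (π / 2) π)]
  calc _ ≤ π⁻¹ * (exp z * √(π / (2 * z)) + 0) := by gcongr
    _ = exp z * (π⁻¹ * √(π / (2 * z))) := by ring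
    _ = _ := by rw [inv_pi_mul_sqrt_div hz]; ring

lemma le_besselI1 {z : ℝ} (hz : 0 < z) :
    exp z / √(2 * π * z) * (1 - 1 / (2 * z)) - 1 / 2 ≤ besselI1 z := by
  have hpi := pi_pos
  have hc : ∀ a b : ℝ, IntervalIntegrable (fun θ => exp (z * cos θ) * cos θ) volume a b :=
    fun a b => (by fun_prop : Continuous _).intervalIntegrable a b
  have hneg : -(π / 2) ≤ ∫ θ in (π / 2)..π, exp (z * cos θ) * cos θ := by
    calc -(π / 2) = ∫ θ in (π / 2)..π, (-1 : ℝ) := by simp; ring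
      _ ≤ _ := by
        refine intervalIntegral.integral_mono_on (by linarith) (by simp) (hc _ _) fun θ hθ => ?_
        have h1 : cos θ ≤ 0 := cos_nonpos_of_pi_div_two_le_of_le hθ.1 (by linarith [hθ.2])
        have h2 : exp (z * cos θ) ≤ 1 := exp_le_one_iff.2 (mul_nonpos_of_nonneg_of_nonpos hz.le h1)
        nlinarith [neg_one_le_cos θ, exp_pos (z * cos θ)]
  have hi0 := integrableOn_exp_neg_mul_sq hz
  have hi2 := integrableOn_sq_mul_exp_neg_mul_sq hz
  have hi : IntegrableOn (fun s : ℝ => exp (-z * s ^ 2) * (1 - s ^ 2)) (Ioi 0) :=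
    (hi0.sub hi2).congr (Eventually.of_forall fun s => by simp only [Pi.sub_apply]; ring)
  have hval : ∫ s in Ioi (0 : ℝ), exp (-z * s ^ 2) * (1 - s ^ 2) =
      √(π / z) / 2 * (1 - 1 / (2 * z)) := by
    calc ∫ s in Ioi (0 : ℝ), exp (-z * s ^ 2) * (1 - s ^ 2)
        = ∫ s in Ioi (0 : ℝ), (exp (-z * s ^ 2) - s ^ 2 * exp (-z * s ^ 2)) := by
          congr 1; ext s; ring
      _ = _ := by
          rw [integral_sub hi0 hi2, integral_gaussian_Ioi, integral_sq_mul_exp_neg_mul_sq_Ioi hz]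
          ring
  have hpos : exp z * √(π / (2 * z)) * (1 - 1 / (2 * z)) ≤
      ∫ θ in (0 : ℝ)..(π / 2), exp (z * cos θ) * cos θ := by
    calc exp z * √(π / (2 * z)) * (1 - 1 / (2 * z))
        = exp z * (√2 * ∫ s in Ioi (0 : ℝ), exp (-z * s ^ 2) * (1 - s ^ 2)) := by
          rw [hval, ← sqrt_two_mul_sqrt_div hz]; ring
      _ ≤ exp z * (√2 * ∫ s in (0 : ℝ)..1, exp (-z * s ^ 2) * (1 - s ^ 2)) := by
          gcongr ?_ * (?_ * ?_)
          rw [intervalIntegral.integral_of_le zero_le_one, ← Ioc_union_Ioi_eq_Ioi zero_le_one,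
            setIntegral_union Ioc_disjoint_Ioi_same measurableSet_Ioi
              (hi.mono_set Ioc_subset_Ioi_self) (hi.mono_set (Ioi_subset_Ioi zero_le_one))]
          have : ∫ s in Ioi (1 : ℝ), exp (-z * s ^ 2) * (1 - s ^ 2) ≤ 0 := by
            refine setIntegral_nonpos measurableSet_Ioi fun s hs => ?_
            have hs : 1 < s := hs
            exact mul_nonpos_of_nonneg_of_nonpos (exp_pos _).le (by nlinarith)
          linarith
      _ = ∫ θ in (0 : ℝ)..(π / 2), exp z * (exp (-z * (√2 * sin (θ / 2)) ^ 2) *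
            (1 - (√2 * sin (θ / 2)) ^ 2) * cos (θ / 2)) := by
          rw [intervalIntegral.integral_const_mul, integral_comp_sqrt_two_mul_sin
            (g := fun s => exp (-z * s ^ 2) * (1 - s ^ 2)) (by fun_prop)]
      _ ≤ _ := by
          refine intervalIntegral.integral_mono_on (by positivity)
            ((by fun_prop : Continuous _).intervalIntegrable _ _) (hc _ _) fun θ hθ => ?_
          rw [exp_mul_cos_eq, ← cos_eq_one_sub_sq, mul_assoc, mul_assoc]
          gcongr
          exact mul_le_of_le_one_right
            (cos_nonneg_of_neg_pi_div_two_le_of_le (by linarith [hθ.1]) hθ.2) (cos_le_one _)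
  rw [besselI1_eq_integral, ← intervalIntegral.integral_add_adjacent_intervals (hc 0 (π / 2))
    (hc (π / 2) π)]
  calc exp z / √(2 * π * z) * (1 - 1 / (2 * z)) - 1 / 2
      = exp z * (π⁻¹ * √(π / (2 * z))) * (1 - 1 / (2 * z)) - 1 / 2 := by
        rw [inv_pi_mul_sqrt_div hz]; ring
    _ = π⁻¹ * (exp z * √(π / (2 * z)) * (1 - 1 / (2 * z)) + -(π / 2)) := by
        field_simp
        ring
    _ ≤ _ := by gcongr

/-- `I₁` divided by its leading asymptotic term at infinity. -/
noncomputable def scaledI1 (z : ℝ) : ℝ := besselI1 z * exp (-z) * √(2 * π * z)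

/-- `K₁` divided by its leading asymptotic term at infinity. -/
noncomputable def scaledK1 (z : ℝ) : ℝ := besselK1 z * exp z * √(2 * z / π)

lemma besselI1_pos {z : ℝ} (hz : 0 < z) : 0 < besselI1 z :=
  (half_pos hz).trans_le (half_le_besselI1 hz.le)

lemma scaledI1_pos {z : ℝ} (hz : 0 < z) : 0 < scaledI1 z := by
  have := besselI1_pos hz
  unfold scaledI1
  positivity

lemma scaledI1_le_one {z : ℝ} (hz : 0 < z) : scaledI1 z ≤ 1 := by
  have hs : 0 < √(2 * π * z) := by positivity
  calc scaledI1 z ≤ exp z / √(2 * π * z) * exp (-z) * √(2 * π * z) := by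
        unfold scaledI1
        gcongr
        exact besselI1_le hz
    _ = exp z * exp (-z) := by field_simp
    _ = 1 := by rw [← exp_add]; simp

lemma sqrt_two_pi_mul_le {z : ℝ} (hz : 0 ≤ z) : √(2 * π * z) ≤ (7 + z) / 2 := by
  rw [sqrt_le_left (by positivity)]
  nlinarith [sq_nonneg (7 - z), mul_le_mul_of_nonneg_right pi_lt_d2.le hz]

lemma one_sub_le_scaledI1 {z : ℝ} (hz : 0 < z) : 1 - 3 / z ≤ scaledI1 z := by
  have hs : 0 < √(2 * π * z) := by positivity
  have he : exp z * exp (-z) = 1 := by rw [← exp_add]; simp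
  have h1 : 1 - 1 / (2 * z) - 1 / 2 * (exp (-z) * √(2 * π * z)) ≤ scaledI1 z := by
    calc 1 - 1 / (2 * z) - 1 / 2 * (exp (-z) * √(2 * π * z))
        = exp z * exp (-z) * (1 - 1 / (2 * z)) - 1 / 2 * (exp (-z) * √(2 * π * z)) := by
          rw [he, one_mul]
      _ = (exp z / √(2 * π * z) * (1 - 1 / (2 * z)) - 1 / 2) * exp (-z) * √(2 * π * z) := by
          field_simp
      _ ≤ scaledI1 z := by
          unfold scaledI1
          gcongr
          exact le_besselI1 hz
  have h2 : exp (-z) * √(2 * π * z) ≤ 4 / z := by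
    rw [exp_neg, inv_mul_eq_div, div_le_div_iff₀ (exp_pos z) hz]
    have h3 := quadratic_le_exp_of_nonneg hz.le
    have h4 := sqrt_two_pi_mul_le hz.le
    nlinarith
  have h5 : 1 / (2 * z) = (1 / 2) * (1 / z) := by field_simp
  have h6 : 3 / z = 3 * (1 / z) := by ring
  have h7 : 4 / z = 4 * (1 / z) := by ring
  have h8 : 0 < 1 / z := by positivity
  linarith

lemma scaledK1_bounds {z : ℝ} (hz : 0 < z) : 1 ≤ scaledK1 z ∧ scaledK1 z ≤ 1 + 1 / (2 * z) := by
  have he : exp (-z) * exp z = 1 := by rw [← exp_add]; simp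
  have hs : √(π / (2 * z)) * √(2 * z / π) = 1 := by
    have hpi := pi_pos
    rw [← sqrt_mul (by positivity), show π / (2 * z) * (2 * z / π) = 1 by field_simp, sqrt_one]
  obtain ⟨h1, h2⟩ := besselK1_bounds hz
  unfold scaledK1
  constructor
  · calc 1 = √(π / (2 * z)) * exp (-z) * exp z * √(2 * z / π) := by
          linear_combination (-√(π / (2 * z)) * √(2 * z / π)) * he - hs
      _ ≤ _ := by gcongr
  · calc _ ≤ √(π / (2 * z)) * exp (-z) * (1 + 1 / (2 * z)) * exp z * √(2 * z / π) := by gcongr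
      _ = _ := by
        linear_combination (√(π / (2 * z)) * √(2 * z / π) * (1 + 1 / (2 * z))) * he +
          (1 + 1 / (2 * z)) * hs

lemma mul_besselK1_mul_besselI1 {a ξ : ℝ} (ha : 0 < a) (hξ : 0 < ξ) :
    ξ * besselK1 (a * ξ) * besselI1 ξ =
      exp (-(a - 1) * ξ) / (2 * √a) * (scaledK1 (a * ξ) * scaledI1 ξ) := by
  have hpi := pi_pos
  have hs : √(2 * (a * ξ) / π) * √(2 * π * ξ) = 2 * ξ * √a := by
    rw [← sqrt_mul (by positivity),
      show 2 * (a * ξ) / π * (2 * π * ξ) = (2 * ξ) ^ 2 * a by field_simp,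
      sqrt_mul (by positivity), sqrt_sq (by positivity)]
  have he : exp (-(a - 1) * ξ) * exp (a * ξ) * exp (-ξ) = 1 := by
    rw [← exp_add, ← exp_add, exp_eq_one_iff]; ring
  have hsa : √a ≠ 0 := by positivity
  unfold scaledK1 scaledI1
  calc ξ * besselK1 (a * ξ) * besselI1 ξ
      = (exp (-(a - 1) * ξ) * exp (a * ξ) * exp (-ξ)) * (2 * ξ * √a) *
          (besselK1 (a * ξ) * besselI1 ξ) / (2 * √a) := by
        rw [he]; field_simp
    _ = _ := by rw [← hs]; ring

lemma log_besselI1 {z : ℝ} (hz : 0 < z) :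
    log (besselI1 z) = z - log z / 2 - log (2 * π) / 2 + log (scaledI1 z) := by
  have hI := besselI1_pos hz
  have hpi := pi_pos
  unfold scaledI1
  rw [log_mul (x := besselI1 z * exp (-z)) (by positivity) (by positivity), log_mul hI.ne' (by positivity), log_exp,
    log_sqrt (by positivity), log_mul (by positivity) hz.ne']
  ring

lemma abs_log_le_rpow {z : ℝ} (hz : 0 < z) : |log z| ≤ 2 * z ^ (-(1 / 2) : ℝ) + z := by
  have h1 : 0 < z ^ (-(1 / 2) : ℝ) := by positivity
  have h2 := log_le_sub_one_of_pos h1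
  rw [log_rpow hz] at h2
  have h3 := log_le_sub_one_of_pos hz
  rw [abs_le]
  constructor <;> linarith

lemma abs_scaled_mul_log_sub_le_of_large {p ξ : ℝ} (hξ : 6 ≤ ξ) (hp1 : 1 ≤ p)
    (hp2 : p ≤ 1 + 1 / (2 * ξ)) :
    |p * scaledI1 ξ * log (besselI1 ξ) - (ξ - log ξ / 2)| ≤ 11 := by
  have hξ0 : 0 < ξ := by linarith
  have hq0 := scaledI1_pos hξ0
  have hq1 := scaledI1_le_one hξ0
  have hq2 := one_sub_le_scaledI1 hξ0
  have hinv : 3 / ξ ≤ 1 / 2 := by rw [div_le_div_iff₀ hξ0 two_pos]; linarith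
  have hpq : |p * scaledI1 ξ - 1| ≤ 3 / ξ := by
    have h5 : 1 / (2 * ξ) = (1 / 6) * (3 / ξ) := by field_simp; norm_num
    have h6 : 0 < 3 / ξ := by positivity
    rw [abs_le]
    constructor <;> nlinarith
  have hlogq : |log (scaledI1 ξ)| ≤ 1 := by
    have h1 : log (scaledI1 ξ) ≤ 0 := log_nonpos hq0.le hq1
    have h2 : log (1 / 2) ≤ log (scaledI1 ξ) := log_le_log (by norm_num) (by linarith)
    rw [one_div, log_inv] at h2
    rw [abs_le]
    constructor <;> linarith [log_two_lt_d9]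
  have hlogpi : |log (2 * π) / 2| ≤ 1 := by
    have h1 : 0 ≤ log (2 * π) := log_nonneg (by linarith [pi_gt_three])
    have h2 : log (2 * π) ≤ 2 := by
      rw [log_le_iff_le_exp (by positivity), show (2 : ℝ) = 1 + 1 by norm_num, exp_add]
      nlinarith [exp_one_gt_d9, pi_lt_d2]
    rw [abs_le]
    constructor <;> linarith
  have hL : |log (besselI1 ξ) - (ξ - log ξ / 2)| ≤ 2 := by
    rw [log_besselI1 hξ0]
    rw [abs_le] at *
    constructor <;> linarith [hlogq.1, hlogq.2, hlogpi.1, hlogpi.2]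
  have hlogξ0 : 0 ≤ log ξ := log_nonneg (by linarith)
  have hlogξ1 : log ξ ≤ ξ - 1 := log_le_sub_one_of_pos hξ0
  have hL' : |log (besselI1 ξ)| ≤ 3 * ξ := by
    rw [abs_le] at *
    constructor <;> linarith [hL.1, hL.2]
  calc |p * scaledI1 ξ * log (besselI1 ξ) - (ξ - log ξ / 2)|
      = |(p * scaledI1 ξ - 1) * log (besselI1 ξ) + (log (besselI1 ξ) - (ξ - log ξ / 2))| := by
        congr 1; ring
    _ ≤ |p * scaledI1 ξ - 1| * |log (besselI1 ξ)| + |log (besselI1 ξ) - (ξ - log ξ / 2)| := by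
        rw [← abs_mul]; exact abs_add_le _ _
    _ ≤ 3 / ξ * (3 * ξ) + 2 := by gcongr
    _ = 11 := by field_simp; norm_num

lemma abs_scaled_mul_log_sub_le_of_small {p ξ : ℝ} (hξ0 : 0 < ξ) (hξ : ξ < 6) (hp1 : 1 ≤ p)
    (hp2 : p ≤ 1 + 1 / (2 * ξ)) :
    |p * scaledI1 ξ * log (besselI1 ξ) - (ξ - log ξ / 2)| ≤
      1000 * exp 9 * (1 + ξ ^ (-(1 / 2) : ℝ)) := by
  have hE : 1 ≤ exp 9 := one_le_exp (by norm_num)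
  have hr : 0 < ξ ^ (-(1 / 2) : ℝ) := by positivity
  have hlog := abs_log_le_rpow hξ0
  have hI1 := half_le_besselI1 hξ0.le
  have hIexp : exp ((ξ / 2) ^ 2) ≤ exp 9 := exp_le_exp.2 (by nlinarith)
  have hI2 : besselI1 ξ ≤ ξ / 2 * exp 9 := (besselI1_le_mul_exp hξ0.le).trans (by gcongr)
  have hL : |log (besselI1 ξ)| ≤ |log ξ| + 10 := by
    have h1 := log_le_log (by positivity) hI1
    have h2 := log_le_log (besselI1_pos hξ0) hI2
    rw [log_mul (by positivity) (by positivity), log_exp] at h2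
    rw [log_div hξ0.ne' two_ne_zero] at h1 h2
    have h3 := neg_abs_le (log ξ)
    have h4 := le_abs_self (log ξ)
    rw [abs_le]
    constructor <;> linarith [log_two_lt_d9, log_two_gt_d9]
  have hq : scaledI1 ξ ≤ 4 * ξ * exp 9 := by
    have hs := sqrt_two_pi_mul_le hξ0.le
    calc scaledI1 ξ ≤ ξ / 2 * exp 9 * 1 * ((7 + ξ) / 2) := by
          unfold scaledI1
          have := (besselI1_pos hξ0).le
          gcongr
          exact exp_le_one_iff.2 (by linarith)
      _ = (ξ * exp 9) * ((7 + ξ) / 4) := by ring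
      _ ≤ (ξ * exp 9) * 4 := by gcongr; linarith
      _ = _ := by ring
  have hq0 := scaledI1_pos hξ0
  have hpq : |p * scaledI1 ξ| ≤ 26 * exp 9 := by
    rw [abs_of_nonneg (by positivity)]
    calc p * scaledI1 ξ ≤ (1 + 1 / (2 * ξ)) * (4 * ξ * exp 9) := by gcongr
      _ = (4 * ξ + 2) * exp 9 := by field_simp; ring
      _ ≤ _ := by gcongr; linarith
  calc |p * scaledI1 ξ * log (besselI1 ξ) - (ξ - log ξ / 2)|
      ≤ |p * scaledI1 ξ| * |log (besselI1 ξ)| + |ξ - log ξ / 2| := by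
        rw [← abs_mul]; exact abs_sub _ _
    _ ≤ 26 * exp 9 * (|log ξ| + 10) + (6 + |log ξ|) := by
        gcongr
        have h3 := neg_abs_le (log ξ)
        have h4 := le_abs_self (log ξ)
        have h5 := abs_nonneg (log ξ)
        rw [abs_le]
        constructor <;> linarith
    _ ≤ 26 * exp 9 * (2 * ξ ^ (-(1 / 2) : ℝ) + 16) + (12 + 2 * ξ ^ (-(1 / 2) : ℝ)) := by
        gcongr ?_ * ?_ + ?_ <;> linarith
    _ ≤ _ := by nlinarith

lemma exists_integrand_bound : ∃ C : ℝ, ∀ a : ℝ, 1 ≤ a → ∀ ξ : ℝ, 0 < ξ →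
    |ξ * besselK1 (a * ξ) * besselI1 ξ * log (besselI1 ξ) -
      1 / (2 * √a) * (exp (-(a - 1) * ξ) * (ξ - log ξ / 2))| ≤
      C * (exp (-(a - 1) * ξ) * (1 + ξ ^ (-(1 / 2) : ℝ))) := by
  refine ⟨1000 * exp 9, fun a ha ξ hξ => ?_⟩
  have ha0 : 0 < a := by linarith
  obtain ⟨hp1, hp2⟩ := scaledK1_bounds (mul_pos ha0 hξ)
  have hp3 : scaledK1 (a * ξ) ≤ 1 + 1 / (2 * ξ) := by
    refine hp2.trans ?_
    gcongr
    exact le_mul_of_one_le_left hξ.le ha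
  have hr : 0 < ξ ^ (-(1 / 2) : ℝ) := by positivity
  have hmain : |scaledK1 (a * ξ) * scaledI1 ξ * log (besselI1 ξ) - (ξ - log ξ / 2)| ≤
      1000 * exp 9 * (1 + ξ ^ (-(1 / 2) : ℝ)) := by
    rcases lt_or_ge ξ 6 with h | h
    · exact abs_scaled_mul_log_sub_le_of_small hξ h hp1 hp3
    · refine (abs_scaled_mul_log_sub_le_of_large h hp1 hp3).trans ?_
      have hE : 1 ≤ exp 9 := one_le_exp (by norm_num)
      nlinarith
  have hs1 : 1 ≤ √a := one_le_sqrt.2 ha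
  have hs : 1 / (2 * √a) ≤ 1 := by
    rw [div_le_one (by positivity)]
    linarith
  rw [mul_besselK1_mul_besselI1 ha0 hξ]
  calc _ = |1 / (2 * √a) * exp (-(a - 1) * ξ) *
        (scaledK1 (a * ξ) * scaledI1 ξ * log (besselI1 ξ) - (ξ - log ξ / 2))| := by
        congr 1; ring
    _ = 1 / (2 * √a) * exp (-(a - 1) * ξ) *
        |scaledK1 (a * ξ) * scaledI1 ξ * log (besselI1 ξ) - (ξ - log ξ / 2)| := by
        rw [abs_mul, abs_of_nonneg (by positivity)]
    _ ≤ 1 * exp (-(a - 1) * ξ) * (1000 * exp 9 * (1 + ξ ^ (-(1 / 2) : ℝ))) := by gcongr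
    _ = _ := by ring

lemma integrableOn_rpow_mul_exp_neg_mul {ε s : ℝ} (hε : 0 < ε) (hs : -1 < s) :
    IntegrableOn (fun ξ : ℝ => ξ ^ s * exp (-ε * ξ)) (Ioi 0) := by
  simpa using integrableOn_rpow_mul_exp_neg_mul_rpow hs one_pos hε

lemma integrableOn_exp_neg_mul {ε : ℝ} (hε : 0 < ε) :
    IntegrableOn (fun ξ : ℝ => exp (-ε * ξ)) (Ioi 0) := by
  simpa using integrableOn_rpow_mul_exp_neg_mul hε (s := 0) (by norm_num)

lemma integrableOn_mul_exp_neg_mul {ε : ℝ} (hε : 0 < ε) :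
    IntegrableOn (fun ξ : ℝ => ξ * exp (-ε * ξ)) (Ioi 0) := by
  simpa using integrableOn_rpow_mul_exp_neg_mul hε (s := 1) (by norm_num)

lemma integral_exp_neg_mul_Ioi_zero {ε : ℝ} (hε : 0 < ε) :
    ∫ ξ in Ioi (0 : ℝ), exp (-ε * ξ) = ε⁻¹ := by
  simpa [rpow_neg_one] using
    integral_rpow_mul_exp_neg_mul_rpow (p := 1) (q := 0) one_pos (by norm_num) hε

lemma integral_mul_exp_neg_mul_Ioi_zero {ε : ℝ} (hε : 0 < ε) :
    ∫ ξ in Ioi (0 : ℝ), ξ * exp (-ε * ξ) = (ε ^ 2)⁻¹ := by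
  have h := integral_rpow_mul_exp_neg_mul_rpow (p := 1) (q := 1) one_pos (by norm_num) hε
  rw [show ((1 : ℝ) + 1) / 1 = 2 by norm_num, show (-((1 : ℝ) + 1) / 1) = -2 by norm_num,
    Gamma_two, rpow_neg hε.le, rpow_two] at h
  simpa using h

lemma integral_rpow_neg_half_mul_exp_neg_mul_Ioi_zero {ε : ℝ} (hε : 0 < ε) :
    ∫ ξ in Ioi (0 : ℝ), ξ ^ (-(1 / 2) : ℝ) * exp (-ε * ξ) = √π / √ε := by
  have h := integral_rpow_mul_exp_neg_mul_rpow (p := 1) (q := -(1 / 2)) one_pos (by norm_num) hε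
  rw [show (-(1 / 2) + (1 : ℝ)) / 1 = 1 / 2 by norm_num,
    show (-(-(1 / 2) + (1 : ℝ)) / 1) = -(1 / 2) by norm_num,
    Gamma_one_half_eq, rpow_neg hε.le, ← sqrt_eq_rpow] at h
  simp only [rpow_one] at h
  rw [h]
  field_simp

lemma integrableOn_exp_neg_mul_mul_log {ε : ℝ} (hε : 0 < ε) :
    IntegrableOn (fun ξ : ℝ => exp (-ε * ξ) * log ξ) (Ioi 0) := by
  refine (((integrableOn_rpow_mul_exp_neg_mul hε (s := -(1 / 2)) (by norm_num)).const_mul 2).add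
    (integrableOn_mul_exp_neg_mul hε)).mono'
    (by fun_prop : Measurable _).aestronglyMeasurable ?_
  filter_upwards [ae_restrict_mem measurableSet_Ioi] with ξ hξ
  have hξ : 0 < ξ := hξ
  rw [norm_mul, Real.norm_of_nonneg (exp_pos _).le, Real.norm_eq_abs]
  calc exp (-ε * ξ) * |log ξ| ≤ exp (-ε * ξ) * (2 * ξ ^ (-(1 / 2) : ℝ) + ξ) := by
        gcongr
        exact abs_log_le_rpow hξ
    _ = _ := by simp only [Pi.add_apply]; ring

lemma integral_exp_neg_mul_mul_log {ε : ℝ} (hε : 0 < ε) :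
    ∫ ξ in Ioi (0 : ℝ), exp (-ε * ξ) * log ξ =
      ε⁻¹ * ((∫ u in Ioi (0 : ℝ), exp (-1 * u) * log u) - log ε) := by
  have h := integral_comp_mul_left_Ioi (fun u : ℝ => exp (-1 * u) * log u) 0 hε
  rw [mul_zero, smul_eq_mul] at h
  rw [mul_sub, ← h, ← integral_exp_neg_mul_Ioi_zero hε, ← integral_mul_const]
  have hcongr : ∫ ξ in Ioi (0 : ℝ), exp (-1 * (ε * ξ)) * log (ε * ξ) =
      ∫ ξ in Ioi (0 : ℝ), (exp (-ε * ξ) * log ε + exp (-ε * ξ) * log ξ) := by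
    refine setIntegral_congr_fun measurableSet_Ioi fun ξ hξ => ?_
    have hξ : 0 < ξ := hξ
    rw [log_mul hε.ne' hξ.ne']
    ring_nf
  rw [hcongr, integral_add ((integrableOn_exp_neg_mul hε).mul_const _)
    (integrableOn_exp_neg_mul_mul_log hε)]
  ring

lemma exists_integral_bound : ∃ C : ℝ, 0 ≤ C ∧ ∀ a : ℝ, 1 < a → a ≤ 2 →
    |(∫ ξ in Ioi (0 : ℝ), ξ * besselK1 (a * ξ) * besselI1 ξ * log (besselI1 ξ)) -
      1 / (2 * √a) * (((a - 1) ^ 2)⁻¹ + (a - 1)⁻¹ * log (a - 1) / 2)| ≤ C * (a - 1)⁻¹ := by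
  obtain ⟨C, hC⟩ := exists_integrand_bound
  set c := ∫ u in Ioi (0 : ℝ), exp (-1 * u) * log u with hc
  refine ⟨|C| * (1 + √π) + |c|, by positivity, fun a ha ha2 => ?_⟩
  set ε := a - 1 with hεdef
  have hε : 0 < ε := by linarith
  have hε1 : ε ≤ 1 := by linarith
  set M : ℝ → ℝ := fun ξ => 1 / (2 * √a) * (exp (-ε * ξ) * (ξ - log ξ / 2)) with hM
  set B : ℝ → ℝ := fun ξ => C * (exp (-ε * ξ) * (1 + ξ ^ (-(1 / 2) : ℝ))) with hB
  set f : ℝ → ℝ := fun ξ => ξ * besselK1 (a * ξ) * besselI1 ξ * log (besselI1 ξ) with hf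
  have hiexp := integrableOn_exp_neg_mul hε
  have himul := integrableOn_mul_exp_neg_mul hε
  have hihalf := integrableOn_rpow_mul_exp_neg_mul hε (s := -(1 / 2)) (by norm_num)
  have hilog := integrableOn_exp_neg_mul_mul_log hε
  have hM_eq : M = fun ξ => 1 / (2 * √a) *
      (ξ * exp (-ε * ξ) - exp (-ε * ξ) * log ξ / 2) := by
    ext ξ; simp only [hM]; ring
  have hB_eq : B = fun ξ => C * (exp (-ε * ξ) + ξ ^ (-(1 / 2) : ℝ) * exp (-ε * ξ)) := by
    ext ξ; simp only [hB]; ring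
  have hMi : IntegrableOn M (Ioi 0) := by
    rw [hM_eq]
    exact (himul.sub (hilog.div_const 2)).const_mul _
  have hBi : IntegrableOn B (Ioi 0) := by
    rw [hB_eq]
    exact (hiexp.add hihalf).const_mul _
  have hMval : ∫ ξ in Ioi (0 : ℝ), M ξ =
      1 / (2 * √a) * ((ε ^ 2)⁻¹ - ε⁻¹ * (c - log ε) / 2) := by
    rw [hM_eq, integral_const_mul, integral_sub himul (hilog.div_const 2), integral_div,
      integral_mul_exp_neg_mul_Ioi_zero hε, integral_exp_neg_mul_mul_log hε]
  have hBval : ∫ ξ in Ioi (0 : ℝ), B ξ = C * (ε⁻¹ + √π / √ε) := by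
    rw [hB_eq, integral_const_mul, integral_add hiexp hihalf, integral_exp_neg_mul_Ioi_zero hε,
      integral_rpow_neg_half_mul_exp_neg_mul_Ioi_zero hε]
  have hbound : ∀ᵐ ξ ∂(volume.restrict (Ioi (0 : ℝ))), ‖f ξ - M ξ‖ ≤ B ξ := by
    filter_upwards [ae_restrict_mem measurableSet_Ioi] with ξ hξ
    exact hC a ha.le ξ hξ
  have hfm : Measurable f := by
    have h1 := measurable_besselI1
    have h2 := measurable_besselK1
    fun_prop
  have hMm : Measurable M := by fun_prop
  have hsub : IntegrableOn (fun ξ => f ξ - M ξ) (Ioi 0) :=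
    Integrable.mono' hBi (hfm.sub hMm).aestronglyMeasurable hbound
  have hfi : IntegrableOn f (Ioi 0) :=
    (hsub.add hMi).congr (Eventually.of_forall fun ξ => by simp)
  have hdiff : |(∫ ξ in Ioi (0 : ℝ), f ξ) - ∫ ξ in Ioi (0 : ℝ), M ξ| ≤
      C * (ε⁻¹ + √π / √ε) := by
    rw [← integral_sub hfi hMi, ← hBval]
    exact norm_integral_le_of_norm_le hBi hbound
  have hsqrt : √π / √ε ≤ √π * ε⁻¹ := by
    rw [div_eq_mul_inv]
    gcongr
    exact le_sqrt_of_sq_le (by nlinarith)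
  have hs : 1 / (2 * √a) ≤ 1 := by
    have hs1 : 1 ≤ √a := one_le_sqrt.2 ha.le
    rw [div_le_one (by positivity)]
    linarith
  have hconst : |1 / (2 * √a) * (ε⁻¹ * c / 2)| ≤ |c| * ε⁻¹ := by
    rw [abs_mul, abs_of_nonneg (by positivity : 0 ≤ 1 / (2 * √a)), abs_div, abs_mul,
      abs_of_pos (inv_pos.2 hε), abs_two]
    have h0 : 0 ≤ ε⁻¹ * |c| := by positivity
    calc 1 / (2 * √a) * (ε⁻¹ * |c| / 2) ≤ 1 * (ε⁻¹ * |c| / 2) := by gcongr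
      _ ≤ _ := by linarith
  calc |(∫ ξ in Ioi (0 : ℝ), f ξ) - 1 / (2 * √a) * ((ε ^ 2)⁻¹ + ε⁻¹ * log ε / 2)|
      = |((∫ ξ in Ioi (0 : ℝ), f ξ) - ∫ ξ in Ioi (0 : ℝ), M ξ) -
          1 / (2 * √a) * (ε⁻¹ * c / 2)| := by
        rw [hMval]; congr 1; ring
    _ ≤ |(∫ ξ in Ioi (0 : ℝ), f ξ) - ∫ ξ in Ioi (0 : ℝ), M ξ| +
          |1 / (2 * √a) * (ε⁻¹ * c / 2)| := abs_sub _ _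
    _ ≤ |C| * (ε⁻¹ + √π * ε⁻¹) + |c| * ε⁻¹ := by
        gcongr
        refine hdiff.trans ?_
        gcongr
        exact le_abs_self C
    _ = _ := by ring

lemma leading_term_bound {ρ a : ℝ} (hρ : 1 ≤ ρ) (ha : 1 ≤ a) (haρ : ρ * (a - 1) ≤ 1 / 2) :
    |log ρ / 2 - 2 * ρ + √a / 2 * (ρ * (a + 1) ^ 2 - (a + 1) * log (ρ * (a + 1)) / 2)| ≤ 6 := by
  have ha2 : a - 1 ≤ 1 / 2 := by nlinarith
  have hb1 : 1 ≤ √a := one_le_sqrt.2 ha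
  have hb2 : √a ≤ a := sqrt_le_left (by linarith) |>.2 (by nlinarith)
  have hlog0 : 0 ≤ log ρ := log_nonneg hρ
  have hlog1 : log ρ ≤ ρ := (log_le_sub_one_of_pos (by linarith)).trans (by linarith)
  have hl0 : 0 ≤ log (a + 1) := log_nonneg (by linarith)
  have hl1 : log (a + 1) ≤ a := (log_le_sub_one_of_pos (by linarith)).trans (by linarith)
  rw [log_mul (by linarith) (by linarith)]
  have h1 : 0 ≤ √a / 2 * (ρ * (a + 1) ^ 2) - 2 * ρ ∧
      √a / 2 * (ρ * (a + 1) ^ 2) - 2 * ρ ≤ 3 := by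
    have h4 : 4 ≤ √a * (a + 1) ^ 2 := by nlinarith
    have h5 : √a * (a + 1) ^ 2 ≤ 4 + 12 * (a - 1) := by
      calc √a * (a + 1) ^ 2 ≤ a * (a + 1) ^ 2 := by gcongr
        _ ≤ _ := by nlinarith [mul_nonneg (sub_nonneg.2 ha) (sub_nonneg.2 ha)]
    constructor <;> nlinarith
  have h2 : 0 ≤ √a * (a + 1) / 4 * log ρ - log ρ / 2 ∧
      √a * (a + 1) / 4 * log ρ - log ρ / 2 ≤ 1 / 2 := by
    have h4 : 2 ≤ √a * (a + 1) := by nlinarith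
    have h5 : √a * (a + 1) ≤ 2 + 4 * (a - 1) := by
      calc √a * (a + 1) ≤ a * (a + 1) := by gcongr
        _ ≤ _ := by nlinarith
    constructor <;> nlinarith
  have h3 : 0 ≤ √a * (a + 1) / 4 * log (a + 1) ∧ √a * (a + 1) / 4 * log (a + 1) ≤ 2 := by
    refine ⟨by positivity, ?_⟩
    calc √a * (a + 1) / 4 * log (a + 1) ≤ (3 / 2) * (3 / 2 + 1) / 4 * (3 / 2) := by
          gcongr <;> linarith
      _ ≤ 2 := by norm_num
  rw [abs_le]
  constructor <;> nlinarith

lemma exists_Ixy_bound : ∃ C : ℝ, ∀ ρ : ℝ, 1 ≤ ρ → |Ixy ρ - 1 / 2 * log ρ| ≤ C := by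
  obtain ⟨C, hC0, hC⟩ := exists_integral_bound
  refine ⟨6 * C + (digamma 2 - digamma 1) + 9, fun ρ hρ => ?_⟩
  have hρ0 : 0 < ρ := by linarith
  set a := √(1 + ρ⁻¹) with ha_def
  have hinv : 0 < ρ⁻¹ := inv_pos.2 hρ0
  have hinv1 : ρ⁻¹ ≤ 1 := inv_le_one_of_one_le₀ hρ
  have hsq : a ^ 2 = 1 + ρ⁻¹ := sq_sqrt (by positivity)
  have ha0 : 0 ≤ a := sqrt_nonneg _
  have ha1 : 1 < a := by nlinarith
  have hρi : ρ * ρ⁻¹ = 1 := mul_inv_cancel₀ hρ0.ne'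
  have hprod : ρ * (a - 1) * (a + 1) = 1 := by linear_combination ρ * hsq + hρi
  have hδ : ρ * (a - 1) ≤ 1 / 2 := by
    have : 0 < ρ * (a - 1) := mul_pos hρ0 (by linarith)
    nlinarith
  have ha2 : a ≤ 3 / 2 := by nlinarith
  have hεi : (a - 1)⁻¹ = ρ * (a + 1) := by
    rw [inv_eq_iff_eq_inv]
    exact eq_inv_of_mul_eq_one_left (by linear_combination hprod)
  have hlogε : log (a - 1) = -log (ρ * (a + 1)) := by
    rw [← hεi, log_inv, neg_neg]
  have hF : |Fint ρ - 1 / (2 * √a) * ((ρ * (a + 1)) ^ 2 -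
      ρ * (a + 1) * log (ρ * (a + 1)) / 2)| ≤ C * (ρ * (a + 1)) := by
    have h := hC a ha1 (by linarith)
    rw [← inv_pow, hεi, hlogε, mul_neg, neg_div, ← sub_eq_add_neg] at h
    exact h
  have hmain : ρ⁻¹ * a * (1 / (2 * √a) * ((ρ * (a + 1)) ^ 2 -
      ρ * (a + 1) * log (ρ * (a + 1)) / 2)) =
      √a / 2 * (ρ * (a + 1) ^ 2 - (a + 1) * log (ρ * (a + 1)) / 2) := by
    have h : a / √a = √a := div_sqrt
    calc _ = (a / √a) / 2 * (ρ * ρ⁻¹) *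
        (ρ * (a + 1) ^ 2 - (a + 1) * log (ρ * (a + 1)) / 2) := by ring
      _ = _ := by rw [h, hρi, mul_one]
  have hlead := leading_term_bound hρ ha1.le hδ
  have herr : |ρ⁻¹ * a * (Fint ρ - 1 / (2 * √a) * ((ρ * (a + 1)) ^ 2 -
      ρ * (a + 1) * log (ρ * (a + 1)) / 2))| ≤ 6 * C := by
    rw [abs_mul, abs_of_nonneg (by positivity)]
    calc _ ≤ ρ⁻¹ * a * (C * (ρ * (a + 1))) := by gcongr
      _ = (ρ * ρ⁻¹) * (a * (a + 1)) * C := by ring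
      _ ≤ 6 * C := by
        rw [hρi, one_mul]
        gcongr
        nlinarith
  have hdig : digamma ρ⁻¹ = digamma (ρ⁻¹ + 1) - ρ := by
    rw [digamma_add_one hinv, inv_inv]; ring
  have hdig1 : digamma 1 ≤ digamma (ρ⁻¹ + 1) :=
    monotoneOn_digamma (mem_Ioi.2 one_pos) (mem_Ioi.2 (by positivity)) (by linarith)
  have hdig2 : digamma (ρ⁻¹ + 1) ≤ digamma 2 :=
    monotoneOn_digamma (mem_Ioi.2 (by positivity)) (mem_Ioi.2 two_pos) (by linarith)
  have hloga0 : 0 ≤ log a := log_nonneg ha1.le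
  have hloga1 : log a ≤ 1 := (log_le_sub_one_of_pos (by linarith)).trans (by linarith)
  have hlogs : 0 ≤ ρ⁻¹ * log √(1 + ρ) ∧ ρ⁻¹ * log √(1 + ρ) ≤ 1 := by
    rw [log_sqrt (by positivity)]
    have h0 : 0 ≤ log (1 + ρ) := log_nonneg (by linarith)
    have h1 : log (1 + ρ) ≤ ρ := (log_le_sub_one_of_pos (by linarith)).trans (by linarith)
    exact ⟨by positivity, by nlinarith⟩
  have hsplit : Ixy ρ - 1 / 2 * log ρ =
      (log ρ / 2 - 2 * ρ + √a / 2 * (ρ * (a + 1) ^ 2 - (a + 1) * log (ρ * (a + 1)) / 2)) +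
      ρ⁻¹ * a * (Fint ρ - 1 / (2 * √a) * ((ρ * (a + 1)) ^ 2 -
        ρ * (a + 1) * log (ρ * (a + 1)) / 2)) +
      log a + ρ⁻¹ * log √(1 + ρ) + (digamma (ρ⁻¹ + 1) - digamma 1) - 1 := by
    rw [Ixy, ← ha_def, log_mul hρ0.ne' (by linarith), hdig]
    linear_combination hmain
  rw [abs_le] at *
  constructor <;> linarith [hlead.1, hlead.2, herr.1, herr.2, hlogs.1, hlogs.2]

/-- Theorem 2: the mutual information is asymptotically equivalent to
(1/2)·log ρ as ρ → ∞, i.e. lim_{ρ→∞} ((1/2) log ρ) / I_XY(ρ) = 1. -/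
theorem stmt_6 :
    Tendsto (fun ρ : ℝ => ((1 / 2) * Real.log ρ) / Ixy ρ) atTop (nhds 1) := by
  obtain ⟨C, hC⟩ := exists_Ixy_bound
  have hlog : Tendsto (fun ρ : ℝ => 1 / 2 * log ρ) atTop atTop :=
    tendsto_log_atTop.const_mul_atTop (by norm_num)
  have hO : (Ixy - fun ρ : ℝ => 1 / 2 * log ρ) =O[atTop] fun _ : ℝ => (1 : ℝ) := by
    refine Asymptotics.IsBigO.of_bound C ?_
    filter_upwards [eventually_ge_atTop 1] with ρ hρ
    simpa using hC ρ hρ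
  have hequiv : Asymptotics.IsEquivalent atTop Ixy fun ρ : ℝ => 1 / 2 * log ρ :=
    hO.trans_isLittleO ((Asymptotics.isLittleO_const_left).2
      (Or.inr (tendsto_norm_atTop_atTop.comp hlog)))
  have hne : ∀ᶠ ρ in atTop, Ixy ρ ≠ 0 :=
    (hequiv.symm.tendsto_atTop hlog).eventually_ne_atTop 0
  exact (Asymptotics.isEquivalent_iff_tendsto_one hne).1 hequiv.symm
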